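/- Let D be a simply connected open subset of the half-plane {(z,ρ) ∈ ℝ² : ρ > 0} and let E : D → ℂ be twice continuously differentiable with Re E > 0, satisfying the Ernst equation on D. Then there exists a continuously differentiable real-valued function k : D → ℝ such that ∂_ξ k = 2iρ · (∂_ξ E)(∂_ξ Ē)/(E + Ē)² on D, where ξ = z + iρ and ∂_ξ = ½(∂_z − i∂_ρ). Equivalently, the quantity ∂_ξ̄ [2iρ (∂_ξ E)(∂_ξ Ē)/(E + Ē)²] is real-valued on D, which is the integrability condition for the conformal factor e^{2k}. -/

import Mathlib

open Complex

noncomputable section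

/-- Partial derivative of a complex-valued function on `ℝ²` with respect to
the first coordinate `z`. -/
def pz (f : ℝ × ℝ → ℂ) (p : ℝ × ℝ) : ℂ := deriv (fun t : ℝ => f (t, p.2)) p.1

/-- Partial derivative of a complex-valued function on `ℝ²` with respect to
the second coordinate `ρ`. -/
def pr (f : ℝ × ℝ → ℂ) (p : ℝ × ℝ) : ℂ := deriv (fun t : ℝ => f (p.1, t)) p.2

/-- `∂_ξ = ½(∂_z − i ∂_ρ)`. -/
def dXi (f : ℝ × ℝ → ℂ) (p : ℝ × ℝ) : ℂ :=
  (2 : ℂ)⁻¹ * (pz f p - Complex.I * pr f p)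

/-- `∂_ξ̄ = ½(∂_z + i ∂_ρ)`. -/
def dXiBar (f : ℝ × ℝ → ℂ) (p : ℝ × ℝ) : ℂ :=
  (2 : ℂ)⁻¹ * (pz f p + Complex.I * pr f p)

/-!
Writing `∂_ρ = i(∂_ξ - ∂_ξ̄)` and `F = Ē`, the Ernst equation and its conjugate become the system
`E_ξξ̄ = 2 E_ξ E_ξ̄ / (E + F) - i (E_ξ - E_ξ̄) / (4ρ)` and the same with `E` and `F` exchanged.
Substituting both into `∂_ξ̄ [2iρ E_ξ F_ξ / (E + F)²]`, the terms cubic in first derivatives and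
the terms in `E_ξ F_ξ` cancel, leaving `-(E_ξ F_ξ̄ + E_ξ̄ F_ξ) / (2 (E + F)²)`, which is real for
`F = Ē`.

For a complex function `G`, the reality of `∂_ξ̄ G` says that the real 1-form `2 Re (G dξ)` is
closed; a primitive `k` then has `k_ξ = G`. Closed forms have local primitives on balls, and these
differ by locally constant functions on overlaps. They glue to a primitive on a simply connected
domain because the bundle of their integration constants is a covering, which has a section.
-/

open Filter Topology

section Gluing

variable {ι B A : Type*} [TopologicalSpace B] [AddGroup A]

/-- The bundle over `B` with fibre `A` whose coordinate in the chart `i` stands for `k - f i`, where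
`k` is a global function to be glued from the local functions `f i`. It is a covering space because
`A` is discrete. -/
def subBundleCore [TopologicalSpace A] [DiscreteTopology A] (U : ι → Set B)
    (hU : ∀ i, IsOpen (U i)) (index : B → ι) (hindex : ∀ x, x ∈ U (index x)) (f : ι → B → A)
    (hf : ∀ i j, ContinuousOn (fun x ↦ f i x - f j x) (U i ∩ U j)) : FiberBundleCore ι B A where
  baseSet := U
  isOpen_baseSet := hU
  indexAt := index
  mem_baseSet_at := hindex
  coordChange i j x v := v + (f i x - f j x)
  coordChange_self i x _ v := by rw [sub_self, add_zero]
  continuousOn_coordChange i j :=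
    (continuous_of_discreteTopology (f := fun w : A × A ↦ w.1 + w.2)).comp_continuousOn
      (continuousOn_snd.prodMk ((hf i j).comp continuousOn_fst fun _ hp ↦ hp.1))
  coordChange_comp i j l x _ v := by rw [add_assoc, sub_add_sub_cancel]

theorem exists_forall_eventually_sub_eq [SimplyConnectedSpace B] [LocallyPathConnectedSpace B]
    {U : ι → Set B} (hU : ∀ i, IsOpen (U i)) (hcover : ∀ x, ∃ i, x ∈ U i) {f : ι → B → A}
    (hf : ∀ i j, ∀ x ∈ U i ∩ U j, ∀ᶠ y in 𝓝 x, f i y - f j y = f i x - f j x) :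
    ∃ k : B → A, ∀ i, ∀ x ∈ U i, ∀ᶠ y in 𝓝 x, k y - f i y = k x - f i x := by
  let _ : TopologicalSpace A := ⊥
  have _ : DiscreteTopology A := ⟨rfl⟩
  choose index hindex using hcover
  have hf_cont (i j : ι) : ContinuousOn (fun x ↦ f i x - f j x) (U i ∩ U j) := fun x hx ↦
    (continuousAt_const.congr_of_eventuallyEq (hf i j x hx)).continuousWithinAt
  let Z := subBundleCore U hU index hindex f hf_cont
  have hcovering : IsCoveringMap Z.proj := FiberBundle.isCoveringMap (F := A) (E := Z.Fiber)
  obtain ⟨b⟩ : Nonempty B := inferInstance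
  obtain ⟨σ, ⟨-, hσ⟩, -⟩ := hcovering.existsUnique_continuousMap_lifts (ContinuousMap.id B) b
    (⟨b, (0 : A)⟩ : Z.TotalSpace) rfl
  have proj_σ (x : B) : (σ x).1 = x := congrFun hσ x
  let k (x : B) : A := (show A from (σ x).2) + f (index x) x
  have localTriv_σ (i : ι) (x : B) : (Z.localTriv i (σ x)).2 = k x - f i x := by
    change (show A from (σ x).2) + (f (index (σ x).1) (σ x).1 - f i (σ x).1) = k x - f i x
    rw [proj_σ, ← add_sub_assoc]
  refine ⟨k, fun i x hx ↦ ?_⟩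
  have hcont : ContinuousAt (fun y ↦ (Z.localTriv i (σ y)).2) x := by
    have hmem : σ x ∈ (Z.localTriv i).source := by
      rw [(Z.localTriv i).mem_source]
      change (σ x).1 ∈ U i
      rwa [proj_σ]
    exact continuous_snd.continuousAt.comp
      (((Z.localTriv i).continuousAt hmem).comp σ.continuous.continuousAt)
  simpa only [localTriv_σ, nhds_discrete, tendsto_pure] using hcont.tendsto

end Gluing

section Calculus

variable {V F : Type*} [NormedAddCommGroup V] [NormedSpace ℝ V] [NormedAddCommGroup F]
  [NormedSpace ℝ F] {s : Set V} {ω : V → V →L[ℝ] F}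

theorem eventually_eq_of_hasFDerivAt_zero {f : V → F} (hs : IsOpen s)
    (hf : ∀ x ∈ s, HasFDerivAt f (0 : V →L[ℝ] F) x) {x : V} (hx : x ∈ s) :
    ∀ᶠ y in 𝓝 x, f y = f x := by
  have hopen : IsOpen (s ∩ f ⁻¹' {f x}) := hs.isOpen_inter_preimage_of_fderiv_eq_zero
    (fun y hy ↦ (hf y hy).differentiableAt.differentiableWithinAt) (fun y hy ↦ (hf y hy).fderiv) _
  filter_upwards [hopen.mem_nhds ⟨hx, rfl⟩] with y hy using hy.2

theorem exists_forall_hasFDerivAt_of_local [SimplyConnectedSpace s] (hs : IsOpen s)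
    (hω : ∀ x ∈ s, ∃ f : V → F, ∀ᶠ y in 𝓝 x, HasFDerivAt f (ω y) y) :
    ∃ k : V → F, ∀ x ∈ s, HasFDerivAt k (ω x) x := by
  have hω_open (x : s) : ∃ f : V → F, ∃ U : Set V,
      (∀ y ∈ U, HasFDerivAt f (ω y) y) ∧ IsOpen U ∧ (x : V) ∈ U :=
    (hω x x.2).imp fun _ hf ↦ eventually_nhds_iff.1 hf
  choose f U hf hU hxU using hω_open
  have := hs.locallyPathConnectedSpace
  obtain ⟨k, hk⟩ := exists_forall_eventually_sub_eq (f := fun i (x : s) ↦ f i x)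
    (fun i ↦ (hU i).preimage continuous_subtype_val) (fun x ↦ ⟨x, hxU x⟩) fun i j x hx ↦ by
      have hsub (y : V) (hy : y ∈ U i ∩ U j) :
          HasFDerivAt (fun z ↦ f i z - f j z) (0 : V →L[ℝ] F) y := by
        simpa only [sub_self] using (hf i y hy.1).fun_sub (hf j y hy.2)
      exact continuous_subtype_val.continuousAt.eventually
        (eventually_eq_of_hasFDerivAt_zero ((hU i).inter (hU j)) hsub hx)
  refine ⟨Function.extend Subtype.val k 0, fun x hx ↦ ?_⟩
  have hk_eq : ∀ᶠ y in 𝓝 x, Function.extend Subtype.val k 0 y =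
      f ⟨x, hx⟩ y + (k ⟨x, hx⟩ - f ⟨x, hx⟩ x) := by
    rw [← map_nhds_subtype_coe_eq_nhds hx (hs.mem_nhds hx), eventually_map]
    filter_upwards [hk ⟨x, hx⟩ ⟨x, hx⟩ (hxU _)] with y hy
    rw [Subtype.val_injective.extend_apply, ← hy, add_sub_cancel]
  exact ((hf ⟨x, hx⟩ x (hxU _)).add_const _).congr_of_eventuallyEq hk_eq

theorem exists_forall_hasFDerivAt_of_fderiv_symmetric [CompleteSpace F] [SimplyConnectedSpace s]
    (hs : IsOpen s) (hω : DifferentiableOn ℝ ω s)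
    (hdω : ∀ x ∈ s, ∀ v w, fderiv ℝ ω x v w = fderiv ℝ ω x w v) :
    ∃ k : V → F, ∀ x ∈ s, HasFDerivAt k (ω x) x := by
  refine exists_forall_hasFDerivAt_of_local hs fun x hx ↦ ?_
  obtain ⟨r, hr, hball⟩ := Metric.isOpen_iff.1 hs x hx
  obtain ⟨f, hf⟩ := (convex_ball x r).exists_forall_hasFDerivAt_of_fderiv_symmetric
    Metric.isOpen_ball (hω.mono hball) fun a ha ↦ hdω a (hball ha)
  exact ⟨f, eventually_of_mem (Metric.ball_mem_nhds x hr) hf⟩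

theorem contDiffOn_one_of_hasFDerivAt {f : V → F} (hs : IsOpen s)
    (hf : ∀ x ∈ s, HasFDerivAt f (ω x) x) (hω : ContinuousOn ω s) : ContDiffOn ℝ 1 f s := by
  rw [← zero_add 1, contDiffOn_succ_iff_fderiv_of_isOpen hs, contDiffOn_zero]
  exact ⟨fun x hx ↦ (hf x hx).differentiableAt.differentiableWithinAt, by simp,
    hω.congr fun x hx ↦ (hf x hx).fderiv⟩

theorem hasFDerivAt_fderiv_apply {f : V → F} {x : V} (hf : ContDiffAt ℝ 2 f x) (v : V) :
    HasFDerivAt (fun y ↦ fderiv ℝ f y v) ((fderiv ℝ (fderiv ℝ f) x).flip v) x :=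
  (ContinuousLinearMap.apply ℝ F v).hasFDerivAt.comp x
    ((hf.fderiv_right (m := 1) le_rfl).differentiableAt one_ne_zero).hasFDerivAt

end Calculus

section Wirtinger

variable {f g : ℝ × ℝ → ℂ} {p : ℝ × ℝ}

theorem pz_eq_fderiv (hf : DifferentiableAt ℝ f p) : pz f p = fderiv ℝ f p (1, 0) :=
  (hf.hasFDerivAt.comp_hasDerivAt (f := fun t ↦ (t, p.2)) p.1
    ((hasDerivAt_id p.1).prodMk (hasDerivAt_const p.1 p.2))).deriv

theorem pr_eq_fderiv (hf : DifferentiableAt ℝ f p) : pr f p = fderiv ℝ f p (0, 1) :=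
  (hf.hasFDerivAt.comp_hasDerivAt (f := fun t ↦ (p.1, t)) p.2
    ((hasDerivAt_const p.2 p.1).prodMk (hasDerivAt_id p.2))).deriv

theorem dXi_eq_fderiv (hf : DifferentiableAt ℝ f p) :
    dXi f p = 2⁻¹ * (fderiv ℝ f p (1, 0) - I * fderiv ℝ f p (0, 1)) := by
  rw [dXi, pz_eq_fderiv hf, pr_eq_fderiv hf]

theorem dXiBar_eq_fderiv (hf : DifferentiableAt ℝ f p) :
    dXiBar f p = 2⁻¹ * (fderiv ℝ f p (1, 0) + I * fderiv ℝ f p (0, 1)) := by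
  rw [dXiBar, pz_eq_fderiv hf, pr_eq_fderiv hf]

theorem dXiBar_add (hf : DifferentiableAt ℝ f p) (hg : DifferentiableAt ℝ g p) :
    dXiBar (fun q ↦ f q + g q) p = dXiBar f p + dXiBar g p := by
  rw [dXiBar_eq_fderiv (hf.fun_add hg), dXiBar_eq_fderiv hf, dXiBar_eq_fderiv hg,
    fderiv_fun_add hf hg]
  simp only [add_apply]
  ring

theorem dXiBar_mul (hf : DifferentiableAt ℝ f p) (hg : DifferentiableAt ℝ g p) :
    dXiBar (fun q ↦ f q * g q) p = dXiBar f p * g p + f p * dXiBar g p := by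
  rw [dXiBar_eq_fderiv (hf.fun_mul hg), dXiBar_eq_fderiv hf, dXiBar_eq_fderiv hg,
    fderiv_fun_mul hf hg]
  simp only [add_apply, smul_apply, smul_eq_mul]
  ring

theorem dXiBar_comp_of_hasDerivAt {φ : ℂ → ℂ} {φ' : ℂ} (hφ : HasDerivAt φ φ' (f p))
    (hf : DifferentiableAt ℝ f p) : dXiBar (fun q ↦ φ (f q)) p = φ' * dXiBar f p := by
  have hcomp : HasFDerivAt (fun q ↦ φ (f q)) (φ' • fderiv ℝ f p) p :=
    hφ.comp_hasFDerivAt p hf.hasFDerivAt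
  rw [dXiBar_eq_fderiv hcomp.differentiableAt, dXiBar_eq_fderiv hf, hcomp.fderiv]
  simp only [smul_apply, smul_eq_mul]
  ring

theorem dXiBar_div_sq (hf : DifferentiableAt ℝ f p) (hg : DifferentiableAt ℝ g p)
    (hgp : g p ≠ 0) :
    dXiBar (fun q ↦ f q / g q ^ 2) p =
      dXiBar f p / g p ^ 2 - 2 * f p * dXiBar g p / g p ^ 3 := by
  have hinv : HasDerivAt (fun w : ℂ ↦ (w ^ 2)⁻¹) (-(2 * g p) / (g p ^ 2) ^ 2) (g p) := by
    simpa using (hasDerivAt_pow 2 (g p)).fun_inv (pow_ne_zero 2 hgp)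
  have hg_inv : DifferentiableAt ℝ (fun q ↦ (g q ^ 2)⁻¹) p :=
    (hg.fun_pow 2).inv (pow_ne_zero 2 hgp)
  simp only [div_eq_mul_inv (f _)]
  rw [dXiBar_mul hf hg_inv, dXiBar_comp_of_hasDerivAt hinv hg]
  field_simp
  ring

theorem pz_conj (f : ℝ × ℝ → ℂ) (p : ℝ × ℝ) :
    pz (fun q ↦ starRingEnd ℂ (f q)) p = starRingEnd ℂ (pz f p) :=
  deriv.star (f := fun t : ℝ ↦ f (t, p.2))

theorem pr_conj (f : ℝ × ℝ → ℂ) (p : ℝ × ℝ) :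
    pr (fun q ↦ starRingEnd ℂ (f q)) p = starRingEnd ℂ (pr f p) :=
  deriv.star (f := fun t : ℝ ↦ f (p.1, t))

theorem dXi_conj (f : ℝ × ℝ → ℂ) (p : ℝ × ℝ) :
    dXi (fun q ↦ starRingEnd ℂ (f q)) p = starRingEnd ℂ (dXiBar f p) := by
  simp only [dXi, dXiBar, pz_conj, pr_conj, map_mul, map_add, map_inv₀, map_ofNat, conj_I]
  ring

theorem dXiBar_conj (f : ℝ × ℝ → ℂ) (p : ℝ × ℝ) :
    dXiBar (fun q ↦ starRingEnd ℂ (f q)) p = starRingEnd ℂ (dXi f p) := by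
  simp only [dXi, dXiBar, pz_conj, pr_conj, map_mul, map_sub, map_inv₀, map_ofNat, conj_I]
  ring

theorem dXiBar_two_mul_I_mul_snd (p : ℝ × ℝ) : dXiBar (fun q ↦ 2 * I * (q.2 : ℂ)) p = -1 := by
  have hpr : pr (fun q ↦ 2 * I * (q.2 : ℂ)) p = 2 * I * 1 :=
    ((hasDerivAt_id p.2).ofReal_comp.const_mul (2 * I)).deriv
  have hpz : pz (fun q ↦ 2 * I * (q.2 : ℂ)) p = 0 :=
    deriv_const p.1 (2 * I * (p.2 : ℂ))
  rw [dXiBar, hpz, hpr]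
  linear_combination I_mul_I

theorem eventuallyEq_pz_fderiv (hf : ContDiffAt ℝ 1 f p) :
    pz f =ᶠ[𝓝 p] fun q ↦ fderiv ℝ f q (1, 0) := by
  filter_upwards [hf.eventually (by simp)] with q hq
  exact pz_eq_fderiv (hq.differentiableAt one_ne_zero)

theorem eventuallyEq_pr_fderiv (hf : ContDiffAt ℝ 1 f p) :
    pr f =ᶠ[𝓝 p] fun q ↦ fderiv ℝ f q (0, 1) := by
  filter_upwards [hf.eventually (by simp)] with q hq
  exact pr_eq_fderiv (hq.differentiableAt one_ne_zero)

theorem hasFDerivAt_pz (hf : ContDiffAt ℝ 2 f p) :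
    HasFDerivAt (pz f) ((fderiv ℝ (fderiv ℝ f) p).flip (1, 0)) p :=
  (hasFDerivAt_fderiv_apply hf (1, 0)).congr_of_eventuallyEq
    (eventuallyEq_pz_fderiv (hf.of_le one_le_two))

theorem hasFDerivAt_pr (hf : ContDiffAt ℝ 2 f p) :
    HasFDerivAt (pr f) ((fderiv ℝ (fderiv ℝ f) p).flip (0, 1)) p :=
  (hasFDerivAt_fderiv_apply hf (0, 1)).congr_of_eventuallyEq
    (eventuallyEq_pr_fderiv (hf.of_le one_le_two))

theorem pr_pz_comm (hf : ContDiffAt ℝ 2 f p) : pr (pz f) p = pz (pr f) p := by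
  have hz := hasFDerivAt_pz hf
  have hr := hasFDerivAt_pr hf
  rw [pr_eq_fderiv hz.differentiableAt, pz_eq_fderiv hr.differentiableAt, hz.fderiv, hr.fderiv]
  exact hf.isSymmSndFDerivAt (by simp) _ _

theorem differentiableAt_dXi (hf : ContDiffAt ℝ 2 f p) : DifferentiableAt ℝ (dXi f) p :=
  ((hasFDerivAt_pz hf).differentiableAt.fun_sub
    ((hasFDerivAt_pr hf).differentiableAt.const_mul I)).const_mul 2⁻¹

theorem dXiBar_dXi (hf : ContDiffAt ℝ 2 f p) :
    dXiBar (dXi f) p = 4⁻¹ * (pz (pz f) p + pr (pr f) p) := by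
  have hz := (hasFDerivAt_pz hf).differentiableAt
  have hr := (hasFDerivAt_pr hf).differentiableAt
  have hdXi : HasFDerivAt (dXi f)
      ((2 : ℂ)⁻¹ • (fderiv ℝ (pz f) p - I • fderiv ℝ (pr f) p)) p :=
    (hz.hasFDerivAt.fun_sub (hr.hasFDerivAt.const_mul I)).const_mul 2⁻¹
  rw [dXiBar_eq_fderiv hdXi.differentiableAt, hdXi.fderiv]
  simp only [smul_apply, sub_apply, smul_eq_mul, ← pz_eq_fderiv hz, ← pz_eq_fderiv hr,
    ← pr_eq_fderiv hz, ← pr_eq_fderiv hr, pr_pz_comm hf]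
  linear_combination -4⁻¹ * pr (pr f) p * I_mul_I

end Wirtinger

section RealPotential

/-- The real covector `v ↦ 2 Re (g (v.1 + i v.2))`, that is `2 Re (g dξ) = g dξ + conj g dξ̄`, as a
function of `g`. A real function with this differential at a point has `∂_ξ`-derivative `g`
there. -/
def twoReMulDXi : ℂ →L[ℝ] ℝ × ℝ →L[ℝ] ℝ :=
  (2 : ℝ) • (reCLM.smulRight (ContinuousLinearMap.fst ℝ ℝ ℝ) -
    imCLM.smulRight (ContinuousLinearMap.snd ℝ ℝ ℝ))

theorem twoReMulDXi_apply (g : ℂ) (v : ℝ × ℝ) :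
    twoReMulDXi g v = 2 * (g.re * v.1 - g.im * v.2) := rfl

theorem dXi_ofReal_of_hasFDerivAt {k : ℝ × ℝ → ℝ} {p : ℝ × ℝ} {g : ℂ}
    (hk : HasFDerivAt k (twoReMulDXi g) p) : dXi (fun q ↦ (k q : ℂ)) p = g := by
  have hofReal : HasFDerivAt (fun q ↦ (k q : ℂ)) (ofRealCLM.comp (twoReMulDXi g)) p :=
    ofRealCLM.hasFDerivAt.comp p hk
  rw [dXi_eq_fderiv hofReal.differentiableAt, hofReal.fderiv]
  apply Complex.ext <;> simp [twoReMulDXi_apply]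

theorem fderiv_twoReMulDXi_symmetric {G : ℝ × ℝ → ℂ} {p : ℝ × ℝ} (hG : DifferentiableAt ℝ G p)
    (hclosed : (dXiBar G p).im = 0) (v w : ℝ × ℝ) :
    fderiv ℝ (fun q ↦ twoReMulDXi (G q)) p v w = fderiv ℝ (fun q ↦ twoReMulDXi (G q)) p w v := by
  have hfderiv : fderiv ℝ (fun q ↦ twoReMulDXi (G q)) p = twoReMulDXi.comp (fderiv ℝ G p) :=
    (twoReMulDXi.hasFDerivAt.comp p hG.hasFDerivAt).fderiv
  have hcoord (x : ℝ × ℝ) :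
      fderiv ℝ G p x = x.1 • fderiv ℝ G p (1, 0) + x.2 • fderiv ℝ G p (0, 1) := by
    rw [← map_smul, ← map_smul, ← map_add]
    simp
  have hcurl : (fderiv ℝ G p (1, 0)).im + (fderiv ℝ G p (0, 1)).re = 0 := by
    rw [dXiBar_eq_fderiv hG] at hclosed
    simpa using hclosed
  rw [hfderiv, ContinuousLinearMap.comp_apply, ContinuousLinearMap.comp_apply, twoReMulDXi_apply,
    twoReMulDXi_apply, hcoord v, hcoord w]
  simp only [add_re, add_im, real_smul, re_ofReal_mul, im_ofReal_mul]
  linear_combination 2 * (v.2 * w.1 - v.1 * w.2) * hcurl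

theorem exists_contDiffOn_dXi_eq {D : Set (ℝ × ℝ)} [SimplyConnectedSpace D] (hD : IsOpen D)
    {G : ℝ × ℝ → ℂ} (hG : DifferentiableOn ℝ G D) (hclosed : ∀ p ∈ D, (dXiBar G p).im = 0) :
    ∃ k : ℝ × ℝ → ℝ, ContDiffOn ℝ 1 k D ∧ ∀ p ∈ D, dXi (fun q ↦ (k q : ℂ)) p = G p := by
  have hω : DifferentiableOn ℝ (fun q ↦ twoReMulDXi (G q)) D :=
    twoReMulDXi.differentiable.comp_differentiableOn hG
  obtain ⟨k, hk⟩ := exists_forall_hasFDerivAt_of_fderiv_symmetric hD hω fun p hp ↦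
    fderiv_twoReMulDXi_symmetric (hG.differentiableAt (hD.mem_nhds hp)) (hclosed p hp)
  exact ⟨k, contDiffOn_one_of_hasFDerivAt hD hk hω.continuousOn,
    fun p hp ↦ dXi_ofReal_of_hasFDerivAt (hk p hp)⟩

end RealPotential

section Ernst

variable {E F : ℝ × ℝ → ℂ} {p : ℝ × ℝ}

/-- The Ernst equation at `p` with the conjugate `Ē` replaced by an arbitrary function `F`. For
`F = Ē` conjugation exchanges `E` and `F`, so the pair `(E, F)` satisfies a symmetric system in
which no conjugates occur. -/
def ErnstAt (E F : ℝ × ℝ → ℂ) (p : ℝ × ℝ) : Prop :=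
  (E p + F p) * (pz (pz E) p + (p.2 : ℂ)⁻¹ * pr E p + pr (pr E) p) =
    2 * (pz E p ^ 2 + pr E p ^ 2)

theorem ErnstAt.conj_symm (h : ErnstAt E (fun q ↦ starRingEnd ℂ (E q)) p) :
    ErnstAt (fun q ↦ starRingEnd ℂ (E q)) E p := by
  have hconj := congrArg (starRingEnd ℂ) h
  simp only [map_mul, map_add, map_pow, map_inv₀, map_ofNat, conj_conj, conj_ofReal] at hconj
  simpa only [ErnstAt, pz_conj, pr_conj, funext (pz_conj E), funext (pr_conj E)] using hconj

theorem ErnstAt.dXiBar_dXi_eq (h : ErnstAt E F p) (hE : ContDiffAt ℝ 2 E p)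
    (hp : p.2 ≠ 0) (hEF : E p + F p ≠ 0) :
    dXiBar (dXi E) p =
      2 * dXi E p * dXiBar E p / (E p + F p) - I / (4 * p.2) * (dXi E p - dXiBar E p) := by
  have hρ : (p.2 : ℂ) ≠ 0 := ofReal_ne_zero.2 hp
  have hgrad : pz E p ^ 2 + pr E p ^ 2 = 4 * (dXi E p * dXiBar E p) := by
    rw [dXi, dXiBar]
    linear_combination pr E p ^ 2 * I_mul_I
  have hpr : pr E p = I * (dXi E p - dXiBar E p) := by
    rw [dXi, dXiBar]
    linear_combination pr E p * I_mul_I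
  have hlaplacian : pz (pz E) p + pr (pr E) p = 4 * dXiBar (dXi E) p := by
    rw [dXiBar_dXi hE]
    ring
  have hErnst : (E p + F p) *
      (4 * dXiBar (dXi E) p + (p.2 : ℂ)⁻¹ * (I * (dXi E p - dXiBar E p))) =
        2 * (4 * (dXi E p * dXiBar E p)) := by
    rw [← hlaplacian, ← hpr, ← hgrad, ← h]
    ring
  field_simp at hErnst ⊢
  linear_combination hErnst

/-- The function `2iρ E_ξ F_ξ / (E + F)²`, which for `F = Ē` is the prescribed value of `k_ξ`. -/
def kXi (E F : ℝ × ℝ → ℂ) (q : ℝ × ℝ) : ℂ :=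
  2 * I * (q.2 : ℂ) * (dXi E q * dXi F q) / (E q + F q) ^ 2

theorem differentiableAt_kXi (hE : ContDiffAt ℝ 2 E p) (hF : ContDiffAt ℝ 2 F p)
    (hEF : E p + F p ≠ 0) : DifferentiableAt ℝ (kXi E F) p := by
  have := differentiableAt_dXi hE
  have := differentiableAt_dXi hF
  have := hE.differentiableAt two_ne_zero
  have := hF.differentiableAt two_ne_zero
  unfold kXi
  simp only [div_eq_mul_inv]
  fun_prop (disch := exact pow_ne_zero 2 hEF)

theorem dXiBar_kXi (hE : ContDiffAt ℝ 2 E p) (hF : ContDiffAt ℝ 2 F p)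
    (hEF : E p + F p ≠ 0) :
    dXiBar (kXi E F) p =
      (2 * I * p.2 * (dXiBar (dXi E) p * dXi F p + dXi E p * dXiBar (dXi F) p) -
        dXi E p * dXi F p) / (E p + F p) ^ 2 -
      4 * I * p.2 * (dXi E p * dXi F p) * (dXiBar E p + dXiBar F p) / (E p + F p) ^ 3 := by
  have hE₁ := hE.differentiableAt two_ne_zero
  have hF₁ := hF.differentiableAt two_ne_zero
  have hEξ := differentiableAt_dXi hE
  have hFξ := differentiableAt_dXi hF
  have hρ : DifferentiableAt ℝ (fun q : ℝ × ℝ ↦ 2 * I * (q.2 : ℂ)) p := by fun_prop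
  unfold kXi
  rw [dXiBar_div_sq (hρ.fun_mul (hEξ.fun_mul hFξ)) (hE₁.fun_add hF₁) hEF,
    dXiBar_mul hρ (hEξ.fun_mul hFξ), dXiBar_mul hEξ hFξ, dXiBar_two_mul_I_mul_snd,
    dXiBar_add hE₁ hF₁]
  ring

theorem ErnstAt.dXiBar_kXi_eq (hErnstE : ErnstAt E F p) (hErnstF : ErnstAt F E p)
    (hE : ContDiffAt ℝ 2 E p) (hF : ContDiffAt ℝ 2 F p) (hp : p.2 ≠ 0) (hEF : E p + F p ≠ 0) :
    dXiBar (kXi E F) p =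
      -(dXi E p * dXiBar F p + dXiBar E p * dXi F p) / (2 * (E p + F p) ^ 2) := by
  have hρ : (p.2 : ℂ) ≠ 0 := ofReal_ne_zero.2 hp
  have hEξξ := hErnstE.dXiBar_dXi_eq hE hp hEF
  have hFξξ := hErnstF.dXiBar_dXi_eq hF hp (add_comm (E p) (F p) ▸ hEF)
  rw [dXiBar_kXi hE hF hEF, hEξξ, hFξξ, add_comm (F p)]
  field_simp
  linear_combination 4 * (E p + F p) *
    (dXi E p * dXiBar F p + dXiBar E p * dXi F p - 2 * dXi E p * dXi F p) * I_mul_I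

theorem add_conj_ne_zero {w : ℂ} (hw : w.re ≠ 0) : w + starRingEnd ℂ w ≠ 0 := by
  rw [add_conj]
  exact ofReal_ne_zero.2 (mul_ne_zero two_ne_zero hw)

theorem contDiffAt_conj {V : Type*} [NormedAddCommGroup V] [NormedSpace ℝ V] {f : V → ℂ} {x : V}
    {n : WithTop ℕ∞} (hf : ContDiffAt ℝ n f x) :
    ContDiffAt ℝ n (fun y ↦ starRingEnd ℂ (f y)) x :=
  conjCLE.contDiff.contDiffAt.comp x hf

theorem ErnstAt.dXiBar_kXi_conj_eq (h : ErnstAt E (fun q ↦ starRingEnd ℂ (E q)) p)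
    (hE : ContDiffAt ℝ 2 E p) (hp : p.2 ≠ 0) (hRe : (E p).re ≠ 0) :
    dXiBar (kXi E fun q ↦ starRingEnd ℂ (E q)) p =
      ((-(normSq (dXi E p) + normSq (dXiBar E p)) / (8 * (E p).re ^ 2) : ℝ) : ℂ) := by
  rw [h.dXiBar_kXi_eq h.conj_symm hE (contDiffAt_conj hE) hp (add_conj_ne_zero hRe), dXi_conj,
    dXiBar_conj, mul_conj, mul_conj, add_conj]
  push_cast
  ring

end Ernst
theorem conformal_factor_k_exists
    (D : Set (ℝ × ℝ)) (hD : IsOpen D) (hDhalf : ∀ p ∈ D, 0 < p.2)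
    (hDsc : SimplyConnectedSpace D)
    (E : ℝ × ℝ → ℂ) (hE : ContDiffOn ℝ 2 E D)
    (hRe : ∀ p ∈ D, 0 < (E p).re)
    (hErnst : ∀ p ∈ D,
      (E p + (starRingEnd ℂ) (E p)) *
          (pz (pz E) p + (p.2 : ℂ)⁻¹ * pr E p + pr (pr E) p)
        = 2 * ((pz E p) ^ 2 + (pr E p) ^ 2)) :
    (∃ k : ℝ × ℝ → ℝ, ContDiffOn ℝ 1 k D ∧
      ∀ p ∈ D,
        dXi (fun q => (k q : ℂ)) p
          = 2 * Complex.I * (p.2 : ℂ) *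
              (dXi E p * dXi (fun q => (starRingEnd ℂ) (E q)) p) /
              (E p + (starRingEnd ℂ) (E p)) ^ 2) ∧
    (∀ p ∈ D,
      (dXiBar (fun q => 2 * Complex.I * (q.2 : ℂ) *
          (dXi E q * dXi (fun r => (starRingEnd ℂ) (E r)) q) /
          (E q + (starRingEnd ℂ) (E q)) ^ 2) p).im = 0) := by
  have hE_at (p : ℝ × ℝ) (hp : p ∈ D) : ContDiffAt ℝ 2 E p := hE.contDiffAt (hD.mem_nhds hp)
  have hclosed (p : ℝ × ℝ) (hp : p ∈ D) :
      (dXiBar (kXi E fun q ↦ starRingEnd ℂ (E q)) p).im = 0 := by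
    rw [ErnstAt.dXiBar_kXi_conj_eq (hErnst p hp) (hE_at p hp) (hDhalf p hp).ne' (hRe p hp).ne',
      ofReal_im]
  have hdiff : DifferentiableOn ℝ (kXi E fun q ↦ starRingEnd ℂ (E q)) D := fun p hp ↦
    (differentiableAt_kXi (hE_at p hp) (contDiffAt_conj (hE_at p hp))
      (add_conj_ne_zero (hRe p hp).ne')).differentiableWithinAt
  exact ⟨exists_contDiffOn_dXi_eq hD hdiff hclosed, hclosed⟩
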